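/- For every function f ∈ 𝔉 with f ≺ ∛n (the cube root function n ↦ n^{1/3}), the Heisenberg group ℋ₃(ℤ) does not belong to the class ℬ_f. -/

import Mathlib

namespace CAG

/-- The convolution `w₁ ⊗ w₂` of two words, over the padded alphabet
`(Σ ∪ {⋄})²`, modelled as `Option α × Option α` where `none` is the padding symbol `⋄`. -/
def conv {α : Type*} : List α → List α → List (Option α × Option α)
  | [], [] => []
  | a :: as, [] => (some a, none) :: conv as []
  | [], b :: bs => (none, some b) :: conv [] bs
  | a :: as, b :: bs => (some a, some b) :: conv as bs

/-- A binary relation on words is regular if the language of convolutions of its pairs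
is a regular language. -/
def IsRegularRel {α : Type*} (R : Set (List α × List α)) : Prop :=
  Language.IsRegular {w | ∃ p ∈ R, w = conv p.1 p.2}

variable {G : Type*} [Group G]

/-- The alphabet `S = A ∪ A⁻¹` associated to a generating set `A ⊆ G`. -/
def Alph (A : Set G) : Type _ := {x : G // x ∈ A ∪ A⁻¹}

/-- The canonical evaluation map `π : S* → G`. -/
def eval (A : Set G) (w : List (Alph A)) : G := (w.map Subtype.val).prod

/-- The word length `d_A(g)` of `g` with respect to the generating set `A`. -/
noncomputable def wordLength (A : Set G) (g : G) : ℕ :=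
  sInf {n | ∃ w : List (Alph A), eval A w = g ∧ w.length = n}

/-- The distance `d_A(g₁, g₂)` in the Cayley graph of `G` with respect to `A`. -/
noncomputable def cayleyDist (A : Set G) (g₁ g₂ : G) : ℕ := wordLength A (g₁⁻¹ * g₂)

/-- `ψ : L → G` is a Cayley automatic representation of `G` (w.r.t. the
generating set `A`): `L ⊆ S*` is regular, `ψ` is a bijection from `L` onto `G`, and for every
`a ∈ A` the relation `R_a = {(ψ⁻¹(g), ψ⁻¹(g·a)) : g ∈ G}` is regular. -/
def IsCayleyAutomaticRep (A : Set G) (L : Language (Alph A)) (ψ : List (Alph A) → G) : Prop :=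
  Language.IsRegular L ∧ Set.BijOn ψ L Set.univ ∧
    ∀ a ∈ A, IsRegularRel {p : List (Alph A) × List (Alph A) |
      p.1 ∈ L ∧ p.2 ∈ L ∧ ψ p.2 = ψ p.1 * a}

/-- `G` is Cayley automatic with respect to the generating set `A`. -/
def IsCayleyAutomatic (A : Set G) : Prop :=
  ∃ (L : Language (Alph A)) (ψ : List (Alph A) → G), IsCayleyAutomaticRep A L ψ

/-- `G` is automatic (in the sense of Thurston) with respect to the generating set `A`:
there is a regular language `L ⊆ S*` on which the canonical evaluation map `π` is a bijection
onto `G` and all the relations `R_a`, `a ∈ A`, are regular. -/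
def IsAutomatic (A : Set G) : Prop :=
  ∃ L : Language (Alph A), IsCayleyAutomaticRep A L (eval A)

/-- The family `𝔉` of non-decreasing, non-negative real valued functions defined on a
final segment `[Q, ∞)` of `ℕ` (values below `Q` are irrelevant junk values). -/
structure FFun where
  Q : ℕ
  toFun : ℕ → ℝ
  nonneg : ∀ n, Q ≤ n → 0 ≤ toFun n
  mono : ∀ m n, Q ≤ m → m ≤ n → toFun m ≤ toFun n

/-- `h ⪯ f` : there are positive integers `K, M, N`, with `[N,∞)` contained in the domains of
`h` and `f`, such that `h(n) ≤ K·f(M·n)` for all `n ≥ N`. -/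
def FFun.Preceq (h f : FFun) : Prop :=
  ∃ K M N : ℕ, 0 < K ∧ 0 < M ∧ 0 < N ∧ h.Q ≤ N ∧ f.Q ≤ N ∧
    ∀ n, N ≤ n → h.toFun n ≤ K * f.toFun (M * n)

/-- `h ≍ f` iff `h ⪯ f` and `f ⪯ h`. -/
def FFun.Equiv (h f : FFun) : Prop := h.Preceq f ∧ f.Preceq h

/-- `h ≺ f` iff `h ⪯ f` and not `h ≍ f`. -/
def FFun.Prec (h f : FFun) : Prop := h.Preceq f ∧ ¬ h.Equiv f

/-- `G ∈ ℬ_f` with respect to the generating set `A`: there is a Cayley automatic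
representation `ψ : L → G` such that the function
`h(n) = max{d_A(π(w), ψ(w)) : w ∈ L, |w| ≤ n}` satisfies `h ⪯ f`
(stated equivalently: for some positive `K, M, N` with `N ≥ Q_f`, every `w ∈ L` with `|w| ≤ n`
and `n ≥ N` satisfies `d_A(π(w), ψ(w)) ≤ K·f(M·n)`). -/
def InB (A : Set G) (f : FFun) : Prop :=
  ∃ (L : Language (Alph A)) (ψ : List (Alph A) → G),
    IsCayleyAutomaticRep A L ψ ∧
    ∃ K M N : ℕ, 0 < K ∧ 0 < M ∧ 0 < N ∧ f.Q ≤ N ∧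
      ∀ n, N ≤ n → ∀ w ∈ L, w.length ≤ n →
        (cayleyDist A (eval A w) (ψ w) : ℝ) ≤ K * f.toFun (M * n)

/-- The identity function `𝔦(n) = n` as an element of `𝔉`. -/
def identF : FFun where
  Q := 1
  toFun n := n
  nonneg n _ := by positivity
  mono m n _ h := by simpa using (Nat.cast_le (α := ℝ)).mpr h

/-- The exponential function `𝔢(n) = exp n` as an element of `𝔉`. -/
noncomputable def expF : FFun where
  Q := 1
  toFun n := Real.exp n
  nonneg n _ := (Real.exp_pos n).le
  mono m n _ h := Real.exp_le_exp.mpr (by exact_mod_cast h)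

end CAG
namespace CAG

/-- The Heisenberg group `ℋ₃(ℤ)` of `3×3` upper unitriangular integer matrices, an element
being identified with the triple `(x, y, z)` of its upper-right entries, with multiplication
`(x,y,z)·(x',y',z') = (x+x', y+y', z+z'+x·y')`. -/
@[ext] structure Heis where
  x : ℤ
  y : ℤ
  z : ℤ

instance : Mul Heis := ⟨fun g h => ⟨g.x + h.x, g.y + h.y, g.z + h.z + g.x * h.y⟩⟩
instance : One Heis := ⟨⟨0, 0, 0⟩⟩
instance : Inv Heis := ⟨fun g => ⟨-g.x, -g.y, -g.z + g.x * g.y⟩⟩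

lemma Heis.mul_def (g h : Heis) :
    g * h = ⟨g.x + h.x, g.y + h.y, g.z + h.z + g.x * h.y⟩ := rfl
lemma Heis.one_def : (1 : Heis) = ⟨0, 0, 0⟩ := rfl
lemma Heis.inv_def (g : Heis) : g⁻¹ = ⟨-g.x, -g.y, -g.z + g.x * g.y⟩ := rfl

instance : Group Heis where
  mul_assoc a b c := by
    simp only [Heis.mul_def]
    ext <;> dsimp <;> ring
  one_mul a := by simp only [Heis.mul_def, Heis.one_def]; ext <;> dsimp <;> ring
  mul_one a := by simp only [Heis.mul_def, Heis.one_def]; ext <;> dsimp <;> ring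
  inv_mul_cancel a := by
    simp only [Heis.mul_def, Heis.inv_def, Heis.one_def]
    ext <;> dsimp <;> ring

/-- The generator `s = (1,0,0)` of `ℋ₃(ℤ)`. -/
def Heis.s : Heis := ⟨1, 0, 0⟩
/-- The generator `p = (0,1,0)` of `ℋ₃(ℤ)`. -/
def Heis.p : Heis := ⟨0, 1, 0⟩
/-- The generator `q = (0,0,1)` of `ℋ₃(ℤ)`. -/
def Heis.q : Heis := ⟨0, 0, 1⟩

end CAG

open CAG in
/-- The cube root function `n ↦ n^(1/3)` as an element of `𝔉`. -/
noncomputable def cbrtF : FFun where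
  Q := 1
  toFun n := (n : ℝ) ^ ((1 : ℝ) / 3)
  nonneg n _ := Real.rpow_nonneg (Nat.cast_nonneg n) _
  mono m n _ h :=
    Real.rpow_le_rpow (Nat.cast_nonneg m) (by exact_mod_cast h) (by norm_num)


namespace CAG

/-! ### Regular languages and convolutions -/

lemma regular_short {β : Type*} (L : Language β) (h : L.IsRegular) :
    ∃ C : ℕ, ∀ x y : List β, x ++ y ∈ L → ∃ v, v.length ≤ C ∧ x ++ v ∈ L := by
  classical
  obtain ⟨σ, hσ, M, rfl⟩ := h
  have key : ∀ q : σ, ∃ v : List β, (∃ y, M.evalFrom q y ∈ M.accept) →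
      M.evalFrom q v ∈ M.accept := by
    intro q
    by_cases hq : ∃ y, M.evalFrom q y ∈ M.accept
    · obtain ⟨y, hy⟩ := hq
      exact ⟨y, fun _ => hy⟩
    · exact ⟨[], fun h => absurd h hq⟩
  choose v hv using key
  refine ⟨Finset.univ.sup (fun q => (v q).length), fun x y hxy => ?_⟩
  refine ⟨v (M.eval x), Finset.le_sup (f := fun q => (v q).length) (Finset.mem_univ _), ?_⟩
  have e : ∀ z, x ++ z ∈ M.accepts ↔ M.evalFrom (M.eval x) z ∈ M.accept := by
    intro z
    rw [DFA.mem_accepts]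
    change M.evalFrom M.start (x ++ z) ∈ M.accept ↔ _
    rw [DFA.evalFrom_of_append]
    rfl
  rw [e] at hxy ⊢
  exact hv _ ⟨y, hxy⟩

lemma conv_length {α : Type*} (u v : List α) :
    (conv u v).length = max u.length v.length := by
  induction u, v using conv.induct <;> simp_all [conv]

lemma conv_take_fst {α : Type*} (u v : List α) (t : ℕ) :
    ((conv u v).take t).filterMap Prod.fst = u.take t := by
  induction u, v using conv.induct generalizing t with
  | case1 => simp [conv]
  | case2 a as ih => cases t with
    | zero => simp
    | succ t => have := ih t; simp only [conv, List.take_succ_cons, List.filterMap_cons, this,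
        List.take_nil]
  | case3 b bs ih => cases t with
    | zero => simp
    | succ t => have := ih t; simp only [conv, List.take_succ_cons, List.filterMap_cons, this,
        List.take_nil]
  | case4 a as b bs ih => cases t with
    | zero => simp
    | succ t => have := ih t; simp only [conv, List.take_succ_cons, List.filterMap_cons, this]

lemma conv_take_snd {α : Type*} (u v : List α) (t : ℕ) :
    ((conv u v).take t).filterMap Prod.snd = v.take t := by
  induction u, v using conv.induct generalizing t with
  | case1 => simp [conv]
  | case2 a as ih => cases t with
    | zero => simp
    | succ t => have := ih t; simp only [conv, List.take_succ_cons, List.filterMap_cons, this,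
        List.take_nil]
  | case3 b bs ih => cases t with
    | zero => simp
    | succ t => have := ih t; simp only [conv, List.take_succ_cons, List.filterMap_cons, this,
        List.take_nil]
  | case4 a as b bs ih => cases t with
    | zero => simp
    | succ t => have := ih t; simp only [conv, List.take_succ_cons, List.filterMap_cons, this]

lemma rel_short {α : Type*} (R : Set (List α × List α)) (h : IsRegularRel R) :
    ∃ C : ℕ, ∀ u u', (u, u') ∈ R → ∀ t : ℕ, ∃ w w', (w, w') ∈ R ∧
      w.take t = u.take t ∧ w'.take t = u'.take t ∧
      w.length ≤ t + C ∧ w'.length ≤ t + C := by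
  obtain ⟨C, hC⟩ := regular_short _ h
  refine ⟨C, fun u u' hu t => ?_⟩
  by_cases ht : (conv u u').length ≤ t
  · rw [conv_length] at ht
    exact ⟨u, u', hu, rfl, rfl, by omega, by omega⟩
  · push Not at ht
    obtain ⟨v, hv, hm⟩ := hC ((conv u u').take t) ((conv u u').drop t)
      (by rw [List.take_append_drop]; exact ⟨_, hu, rfl⟩)
    obtain ⟨⟨w, w'⟩, hw, hww⟩ := hm
    dsimp only at hww
    have hlt : ((conv u u').take t).length = t := by
      rw [List.length_take]; omega
    have htake : (conv w w').take t = (conv u u').take t := by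
      rw [← hww]
      conv_lhs => rw [List.take_append_of_le_length (by omega)]
      rw [List.take_of_length_le (by omega)]
    have hl : (conv w w').length ≤ t + C := by
      rw [← hww, List.length_append, hlt]; omega
    rw [conv_length] at hl
    refine ⟨w, w', hw, ?_, ?_, by omega, by omega⟩
    · rw [← conv_take_fst w w', htake, conv_take_fst]
    · rw [← conv_take_snd w w', htake, conv_take_snd]

/-! ### Size of Heisenberg elements -/

/-- Weighted size bound. -/
def Bd (k : ℝ) (g : Heis) : Prop :=
  0 ≤ k ∧ |(g.x : ℝ)| ≤ k ∧ |(g.y : ℝ)| ≤ k ∧ |(g.z : ℝ)| ≤ k ^ 2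

lemma Bd.mul {k l : ℝ} {g h : Heis} (hg : Bd k g) (hh : Bd l h) : Bd (k + l) (g * h) := by
  obtain ⟨k0, h1, h2, h3⟩ := hg
  obtain ⟨l0, h4, h5, h6⟩ := hh
  refine ⟨by positivity, ?_, ?_, ?_⟩
  · simp only [Heis.mul_def]; push_cast
    exact (abs_add_le _ _).trans (by linarith)
  · simp only [Heis.mul_def]; push_cast
    exact (abs_add_le _ _).trans (by linarith)
  · simp only [Heis.mul_def]; push_cast
    have := abs_add_three (g.z : ℝ) h.z (g.x * h.y)
    have h7 : |(g.x : ℝ) * h.y| ≤ k * l := by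
      rw [abs_mul]; exact mul_le_mul h1 h5 (abs_nonneg _) k0
    nlinarith [mul_nonneg k0 l0]

lemma Bd.mono {k l : ℝ} {g : Heis} (hg : Bd k g) (h : k ≤ l) : Bd l g := by
  obtain ⟨k0, h1, h2, h3⟩ := hg
  exact ⟨k0.trans h, h1.trans h, h2.trans h, h3.trans (pow_le_pow_left₀ k0 h 2)⟩

lemma Bd.inv {k : ℝ} {g : Heis} (hg : Bd k g) : Bd (2 * k) g⁻¹ := by
  obtain ⟨k0, h1, h2, h3⟩ := hg
  refine ⟨by positivity, ?_, ?_, ?_⟩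
  · simp only [Heis.inv_def]; push_cast
    rw [abs_neg]; linarith
  · simp only [Heis.inv_def]; push_cast
    rw [abs_neg]; linarith
  · simp only [Heis.inv_def]; push_cast
    have h7 : |(g.x : ℝ) * g.y| ≤ k * k := by
      rw [abs_mul]; exact mul_le_mul h1 h2 (abs_nonneg _) k0
    have := abs_add_le (-(g.z : ℝ)) (g.x * g.y)
    rw [abs_neg] at this
    nlinarith

lemma Bd.one : Bd 0 (1 : Heis) := by
  simp [Bd, Heis.one_def]

/-- The standard generating set. -/
abbrev GS : Set Heis := {Heis.s, Heis.p, Heis.q}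

lemma Bd.letter (a : Alph GS) : Bd 1 a.val := by
  obtain ⟨a, ha⟩ := a
  simp only [GS, Set.mem_union, Set.mem_insert_iff, Set.mem_singleton_iff, Set.mem_inv] at ha
  rcases ha with (rfl | rfl | rfl) | (h | h | h)
  · norm_num [Bd, Heis.s]
  · norm_num [Bd, Heis.p]
  · norm_num [Bd, Heis.q]
  all_goals
    rw [inv_eq_iff_eq_inv] at h
    subst h
    norm_num [Bd, Heis.s, Heis.p, Heis.q, Heis.inv_def]

lemma eval_nil : eval GS [] = 1 := rfl

lemma eval_cons (a : Alph GS) (w : List (Alph GS)) :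
    eval GS (a :: w) = a.val * eval GS w := List.prod_cons

lemma eval_append (u v : List (Alph GS)) : eval GS (u ++ v) = eval GS u * eval GS v := by
  induction u with
  | nil => simp [eval_nil]
  | cons a u ih => rw [List.cons_append, eval_cons, eval_cons, ih, mul_assoc]

lemma Bd.eval (w : List (Alph GS)) : Bd w.length (eval GS w) := by
  induction w with
  | nil => simpa [eval_nil] using Bd.one
  | cons a w ih =>
    have := (Bd.letter a).mul ih
    rw [eval_cons, List.length_cons]
    exact this.mono (by push_cast; linarith)

lemma s_zpow (n : ℤ) : Heis.s ^ n = ⟨n, 0, 0⟩ := by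
  induction n with
  | zero => rfl
  | succ n ih => rw [zpow_add_one, ih]; simp [Heis.mul_def, Heis.s]
  | pred n ih =>
    rw [zpow_sub_one, ih]; simp [Heis.mul_def, Heis.inv_def, Heis.s]; ring

lemma p_zpow (n : ℤ) : Heis.p ^ n = ⟨0, n, 0⟩ := by
  induction n with
  | zero => rfl
  | succ n ih => rw [zpow_add_one, ih]; simp [Heis.mul_def, Heis.p]
  | pred n ih =>
    rw [zpow_sub_one, ih]; simp [Heis.mul_def, Heis.inv_def, Heis.p]; ring

lemma q_zpow (n : ℤ) : Heis.q ^ n = ⟨0, 0, n⟩ := by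
  induction n with
  | zero => rfl
  | succ n ih => rw [zpow_add_one, ih]; simp [Heis.mul_def, Heis.q]
  | pred n ih =>
    rw [zpow_sub_one, ih]; simp [Heis.mul_def, Heis.inv_def, Heis.q]; ring

lemma eval_replicate (a : Alph GS) (n : ℕ) : eval GS (List.replicate n a) = a.val ^ n := by
  induction n with
  | zero => simp [eval_nil]
  | succ n ih => rw [List.replicate_succ, eval_cons, ih, pow_succ']

lemma exists_zpow (a : Heis) (ha : a ∈ GS) (n : ℤ) : ∃ w, eval GS w = a ^ n := by
  obtain ⟨m, rfl | rfl⟩ := n.eq_nat_or_neg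
  · exact ⟨List.replicate m ⟨a, Or.inl ha⟩, (eval_replicate _ _).trans (by simp)⟩
  · exact ⟨List.replicate m ⟨a⁻¹, Or.inr (by simpa using ha)⟩, (eval_replicate _ _).trans (by simp)⟩

lemma exists_word (g : Heis) : ∃ w, eval GS w = g := by
  obtain ⟨u, hu⟩ := exists_zpow Heis.q (by simp [GS]) g.z
  obtain ⟨v, hv⟩ := exists_zpow Heis.p (by simp [GS]) g.y
  obtain ⟨w, hw⟩ := exists_zpow Heis.s (by simp [GS]) g.x
  refine ⟨u ++ v ++ w, ?_⟩
  rw [eval_append, eval_append, hu, hv, hw, s_zpow, p_zpow, q_zpow]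
  simp [Heis.mul_def]

lemma Bd.wordLength (g : Heis) : Bd (wordLength GS g) g := by
  have h : {n | ∃ w : List (Alph GS), CAG.eval GS w = g ∧ w.length = n}.Nonempty := by
    obtain ⟨w, hw⟩ := exists_word g
    exact ⟨_, w, hw, rfl⟩
  obtain ⟨w, hw, hl⟩ := Nat.sInf_mem h
  have := Bd.eval w
  rw [hw, hl] at this
  exact this

/-! ### The cocycle -/

/-- The 2-cocycle defining the filiform central extension. -/
def coc (g h : Heis) : ℝ := 2 * g.x * h.z + g.x ^ 2 * h.y

/-- Cost of a straight jump. -/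
def jump (g h : Heis) : ℝ := coc g (g⁻¹ * h)

lemma jump_self (g : Heis) : jump g g = 0 := by
  simp [jump, coc, Heis.one_def]

lemma jump_mul (g a : Heis) : jump g (g * a) = coc g a := by
  simp [jump]

lemma jump_tri (g h k : Heis) :
    jump g h + jump h k - jump g k = coc (g⁻¹ * h) (h⁻¹ * k) := by
  simp only [jump, coc, Heis.mul_def, Heis.inv_def]
  push_cast
  ring

lemma coc_bd {k : ℝ} {g h : Heis} (hg : Bd k g) (hh : Bd k h) : |coc g h| ≤ 3 * k ^ 3 := by
  obtain ⟨k0, h1, h2, h3⟩ := hg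
  obtain ⟨l0, h4, h5, h6⟩ := hh
  unfold coc
  have a1 : |2 * (g.x : ℝ) * h.z| ≤ 2 * k * k ^ 2 := by
    rw [abs_mul, abs_mul, abs_two]; gcongr
  have a2 : |(g.x : ℝ) ^ 2 * h.y| ≤ k ^ 2 * k := by
    rw [abs_mul, abs_pow]; gcongr
  have := abs_add_le (2 * (g.x : ℝ) * h.z) ((g.x : ℝ) ^ 2 * h.y)
  nlinarith

lemma quad_bd {k : ℝ} {a b c d : Heis} (h1 : Bd k (a⁻¹ * b)) (h2 : Bd k (b⁻¹ * d))
    (h3 : Bd k (a⁻¹ * c)) (h4 : Bd k (c⁻¹ * d)) :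
    |jump a b + jump b d - jump a c - jump c d| ≤ 6 * k ^ 3 := by
  have e : jump a b + jump b d - jump a c - jump c d =
      coc (a⁻¹ * b) (b⁻¹ * d) - coc (a⁻¹ * c) (c⁻¹ * d) := by
    rw [← jump_tri, ← jump_tri]; ring
  rw [e]
  have := abs_sub (coc (a⁻¹ * b) (b⁻¹ * d)) (coc (a⁻¹ * c) (c⁻¹ * d))
  linarith [coc_bd h1 h2, coc_bd h3 h4]

/-- Cost of the path of a word. -/
noncomputable def vcost (T : ℕ) (w : List (Alph GS)) : ℝ :=
  ∑ t ∈ Finset.range T, jump (eval GS (w.take t)) (eval GS (w.take (t + 1)))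

lemma step_bd (w : List (Alph GS)) (t : ℕ) :
    Bd 1 ((eval GS (w.take t))⁻¹ * eval GS (w.take (t + 1))) := by
  rw [List.take_add, eval_append, inv_mul_cancel_left]
  refine (Bd.eval _).mono ?_
  have : ((w.drop t).take 1).length ≤ 1 := by rw [List.length_take]; omega
  exact_mod_cast this

lemma strip {k : ℝ} (hk : 1 ≤ k) (u u' : List (Alph GS)) (T : ℕ)
    (h : ∀ t ≤ T, Bd k ((eval GS (u.take t))⁻¹ * eval GS (u'.take t))) :
    |vcost T u - vcost T u' + jump (eval GS (u.take T)) (eval GS (u'.take T))|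
      ≤ T * (6 * k ^ 3) := by
  induction T with
  | zero => simp [vcost, jump_self]
  | succ T ih =>
    have ih := ih (fun t ht => h t (by omega))
    have q := quad_bd (h T (by omega)) ((step_bd u' T).mono hk) ((step_bd u T).mono hk)
      (h (T + 1) le_rfl)
    have e : ∀ w, vcost (T + 1) w = vcost T w +
      jump (eval GS (w.take T)) (eval GS (w.take (T + 1))) := fun w => by
        simp [vcost, Finset.sum_range_succ]
    rw [e, e]
    rw [abs_le] at *
    push_cast
    constructor <;> linarith [ih.1, ih.2, q.1, q.2]

/-- Potential of the group element represented by a word. -/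
noncomputable def pot (T : ℕ) (w : List (Alph GS)) (g : Heis) : ℝ :=
  vcost T w + jump (eval GS w) g

lemma pot_step {k : ℝ} (hk : 1 ≤ k) (u u' : List (Alph GS)) (T : ℕ)
    (h : ∀ t ≤ T, Bd k ((eval GS (u.take t))⁻¹ * eval GS (u'.take t)))
    (hu : u.length ≤ T) (hu' : u'.length ≤ T) (g a : Heis) (ha : Bd 1 a)
    (hg : Bd k ((eval GS u)⁻¹ * g)) (hg' : Bd k ((eval GS u')⁻¹ * (g * a))) :
    |pot T u' (g * a) - pot T u g - coc g a| ≤ (T + 1) * (6 * k ^ 3) := by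
  have s := strip hk u u' T h
  have hT := h T le_rfl
  rw [List.take_of_length_le hu, List.take_of_length_le hu'] at s hT
  have q := quad_bd hT hg' hg (d := g * a) (by rw [inv_mul_cancel_left]; exact ha.mono hk)
  rw [jump_mul] at q
  unfold pot
  rw [abs_le] at *
  constructor <;> linarith [s.1, s.2, q.1, q.2]

lemma fellow {L : Language (Alph GS)} {ψ : List (Alph GS) → Heis} {C : ℕ} {a : Heis}
    (ha : Bd 1 a)
    (hC : ∀ u u', u ∈ L → u' ∈ L → ψ u' = ψ u * a → ∀ t : ℕ, ∃ w w',
      w ∈ L ∧ w' ∈ L ∧ ψ w' = ψ w * a ∧ w.take t = u.take t ∧ w'.take t = u'.take t ∧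
      w.length ≤ t + C ∧ w'.length ≤ t + C)
    {H : ℝ} {T : ℕ} (hH : ∀ w ∈ L, w.length ≤ T + C → Bd H ((eval GS w)⁻¹ * ψ w))
    (u u' : List (Alph GS)) (hu : u ∈ L) (hu' : u' ∈ L) (h : ψ u' = ψ u * a)
    (t : ℕ) (ht : t ≤ T) :
    Bd (3 * C + 1 + 3 * H) ((eval GS (u.take t))⁻¹ * eval GS (u'.take t)) := by
  obtain ⟨w, w', hw, hw', hψ, e, e', l, l'⟩ := hC u u' hu hu' h t
  have b1 := Bd.eval (w.drop t)
  have b2 := (Bd.eval (w'.drop t)).inv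
  have b3 := hH w hw (by omega)
  have b4 := (hH w' hw' (by omega)).inv
  have l1 : ((w.drop t).length : ℝ) ≤ C := by
    rw [List.length_drop]; exact_mod_cast (by omega : w.length - t ≤ C)
  have l2 : ((w'.drop t).length : ℝ) ≤ C := by
    rw [List.length_drop]; exact_mod_cast (by omega : w'.length - t ≤ C)
  have f1 : eval GS w = eval GS (u.take t) * eval GS (w.drop t) := by
    rw [← e, ← eval_append, List.take_append_drop]
  have f2 : eval GS w' = eval GS (u'.take t) * eval GS (w'.drop t) := by
    rw [← e', ← eval_append, List.take_append_drop]
  have := (((b1.mul b3).mul ha).mul b4).mul b2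
  have key : (eval GS (u.take t))⁻¹ * eval GS (u'.take t) =
      eval GS (w.drop t) * ((eval GS w)⁻¹ * ψ w) * a * ((eval GS w')⁻¹ * ψ w')⁻¹ *
        (eval GS (w'.drop t))⁻¹ := by
    rw [hψ, f1, f2]; group
  rw [key]
  exact this.mono (by linarith)

lemma length_step {L : Language (Alph GS)} {ψ : List (Alph GS) → Heis} {C : ℕ} {a : Heis}
    (hinj : Set.InjOn ψ L)
    (hC : ∀ u u', u ∈ L → u' ∈ L → ψ u' = ψ u * a → ∀ t : ℕ, ∃ w w',
      w ∈ L ∧ w' ∈ L ∧ ψ w' = ψ w * a ∧ w.take t = u.take t ∧ w'.take t = u'.take t ∧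
      w.length ≤ t + C ∧ w'.length ≤ t + C)
    (u u' : List (Alph GS)) (hu : u ∈ L) (hu' : u' ∈ L) (h : ψ u' = ψ u * a) :
    u'.length ≤ u.length + (C + 1) := by
  obtain ⟨w, w', hw, hw', hψ, e, e', l, l'⟩ := hC u u' hu hu' h (u.length + 1)
  rw [List.take_of_length_le (l := u) (by omega)] at e
  have hl : w.length ≤ u.length + 1 := by
    have := congrArg List.length e
    rw [List.length_take] at this
    omega
  rw [List.take_of_length_le hl] at e
  subst e
  have : w' = u' := hinj hw' hu' (by rw [hψ, h])
  subst this
  omega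

/-- The counting argument along two positive paths. -/
lemma two_paths (n : ℕ) (len : Heis → ℕ) (F : Heis → ℝ) (C1 : ℕ) (B : ℝ)
    (hs : ∀ g, len (g * Heis.s) ≤ len g + C1)
    (hp : ∀ g, len (g * Heis.p) ≤ len g + C1)
    (T : ℕ) (hT : T = len 1 + C1 * (4 * n))
    (fs : ∀ g, len g ≤ T → len (g * Heis.s) ≤ T →
      |F (g * Heis.s) - F g - coc g Heis.s| ≤ B)
    (fp : ∀ g, len g ≤ T → len (g * Heis.p) ≤ T →
      |F (g * Heis.p) - F g - coc g Heis.p| ≤ B) :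
    2 * (n : ℝ) ^ 3 ≤ 8 * n * B := by
  let Q : ℕ → Heis → ℝ → Prop := fun l g v =>
    len g ≤ len 1 + C1 * l ∧ |F g - F 1 - v| ≤ l * B
  have hle : ∀ l, l ≤ 4 * n → len 1 + C1 * l ≤ T := by
    intro l hl
    rw [hT]
    have := Nat.mul_le_mul_left C1 hl
    omega
  have Qs : ∀ l g v, l + 1 ≤ 4 * n → Q l g v → Q (l + 1) (g * Heis.s) v := by
    intro l g v hl ⟨h1, h2⟩
    have h3 : len (g * Heis.s) ≤ len 1 + C1 * (l + 1) := by
      have := hs g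
      rw [Nat.mul_succ]; omega
    refine ⟨h3, ?_⟩
    have := fs g (h1.trans (hle l (by omega))) (h3.trans (hle _ hl))
    have c0 : coc g Heis.s = 0 := by simp [coc, Heis.s]
    rw [c0] at this
    rw [abs_le] at *
    push_cast
    constructor <;> linarith [h2.1, h2.2, this.1, this.2]
  have Qp : ∀ l g v, l + 1 ≤ 4 * n → Q l g v → Q (l + 1) (g * Heis.p) (v + (g.x : ℝ) ^ 2) := by
    intro l g v hl ⟨h1, h2⟩
    have h3 : len (g * Heis.p) ≤ len 1 + C1 * (l + 1) := by
      have := hp g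
      rw [Nat.mul_succ]; omega
    refine ⟨h3, ?_⟩
    have := fp g (h1.trans (hle l (by omega))) (h3.trans (hle _ hl))
    have c0 : coc g Heis.p = (g.x : ℝ) ^ 2 := by simp [coc, Heis.p]
    rw [c0] at this
    rw [abs_le] at *
    push_cast
    constructor <;> linarith [h2.1, h2.2, this.1, this.2]
  have Qsm : ∀ (m l : ℕ) (x y z : ℤ) (v : ℝ), l + m ≤ 4 * n → Q l ⟨x, y, z⟩ v →
      Q (l + m) ⟨x + m, y, z⟩ v := by
    intro m
    induction m with
    | zero => intro l x y z v _ h; simpa using h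
    | succ m ih =>
      intro l x y z v hl h
      have := Qs _ _ _ (by omega) (ih l x y z v (by omega) h)
      convert this using 1
      · omega
      · ext <;> simp [Heis.mul_def, Heis.s] <;> ring
  have Qpm : ∀ (m l : ℕ) (x y z : ℤ) (v : ℝ), l + m ≤ 4 * n → Q l ⟨x, y, z⟩ v →
      Q (l + m) ⟨x, y + m, z + m * x⟩ (v + m * (x : ℝ) ^ 2) := by
    intro m
    induction m with
    | zero => intro l x y z v _ h; simpa using h
    | succ m ih =>
      intro l x y z v hl h
      have := Qp _ _ _ (by omega) (ih l x y z v (by omega) h)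
      convert this using 1
      · omega
      · ext <;> simp [Heis.mul_def, Heis.p] <;> ring
      · push_cast; ring
  have Q0 : Q 0 ⟨0, 0, 0⟩ 0 := by
    change Q 0 1 0
    simp [Q]
  have A1 := Qsm n _ _ _ _ _ (by omega) (Qpm (2 * n) _ _ _ _ _ (by omega)
    (Qsm n _ _ _ _ _ (by omega) Q0))
  have A2 := Qpm n _ _ _ _ _ (by omega) (Qsm (2 * n) _ _ _ _ _ (by omega)
    (Qpm n _ _ _ _ _ (by omega) Q0))
  have eg : (⟨0 + (n : ℤ) + n, 0 + ((2 * n : ℕ) : ℤ), 0 + ((2 * n : ℕ) : ℤ) * (0 + n)⟩ : Heis) =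
      ⟨0 + ((2 * n : ℕ) : ℤ), 0 + (n : ℤ) + n, 0 + (n : ℤ) * 0 + n * (0 + ((2 * n : ℕ) : ℤ))⟩ := by
    ext <;> push_cast <;> ring
  rw [eg] at A1
  have B1 := abs_le.1 A1.2
  have B2 := abs_le.1 A2.2
  push_cast at B1 B2
  ring_nf at B1 B2 ⊢
  linarith [B1.1, B1.2, B2.1, B2.2]

end CAG

open CAG in
/-- For every `f ∈ 𝔉` with `f ≺ ∛·` (the cube root function), the Heisenberg group `ℋ₃(ℤ)`
does not belong to the class `ℬ_f`. -/
theorem heisenberg_not_mem_classB_of_prec_cbrt (f : FFun) (hf : f.Prec cbrtF) :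
    ¬ InB ({Heis.s, Heis.p, Heis.q} : Set Heis) f := by
  rintro ⟨L, ψ, ⟨_, hbij, hreg⟩, K, M, N, hK, hM, hN, hQ, hd⟩
  apply hf.2
  refine ⟨hf.1, ?_⟩
  obtain ⟨Cs, hCs⟩ := rel_short _ (hreg Heis.s (by simp))
  obtain ⟨Cp, hCp⟩ := rel_short _ (hreg Heis.p (by simp))
  obtain ⟨C, hC1, hC2⟩ : ∃ C, Cs ≤ C ∧ Cp ≤ C := ⟨max Cs Cp, le_max_left _ _, le_max_right _ _⟩
  have hs : ∀ u u', u ∈ L → u' ∈ L → ψ u' = ψ u * Heis.s → ∀ t : ℕ, ∃ w w',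
      w ∈ L ∧ w' ∈ L ∧ ψ w' = ψ w * Heis.s ∧ w.take t = u.take t ∧ w'.take t = u'.take t ∧
      w.length ≤ t + C ∧ w'.length ≤ t + C := by
    intro u u' h1 h2 h3 t
    obtain ⟨w, w', ⟨a, b, c⟩, d, e, f, g⟩ := hCs u u' ⟨h1, h2, h3⟩ t
    exact ⟨w, w', a, b, c, d, e, by omega, by omega⟩
  have hp : ∀ u u', u ∈ L → u' ∈ L → ψ u' = ψ u * Heis.p → ∀ t : ℕ, ∃ w w',
      w ∈ L ∧ w' ∈ L ∧ ψ w' = ψ w * Heis.p ∧ w.take t = u.take t ∧ w'.take t = u'.take t ∧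
      w.length ≤ t + C ∧ w'.length ≤ t + C := by
    intro u u' h1 h2 h3 t
    obtain ⟨w, w', ⟨a, b, c⟩, d, e, f, g⟩ := hCp u u' ⟨h1, h2, h3⟩ t
    exact ⟨w, w', a, b, c, d, e, by omega, by omega⟩
  have hsb : Bd 1 Heis.s := by norm_num [Bd, Heis.s]
  have hpb : Bd 1 Heis.p := by norm_num [Bd, Heis.p]
  have hsurj : ∀ g, ∃ w, w ∈ L ∧ ψ w = g := fun g => hbij.surjOn (Set.mem_univ g)
  choose U hUL hUψ using hsurj
  -- the main inequality
  obtain ⟨c0, hc0⟩ : ∃ c0, c0 = (U 1).length := ⟨_, rfl⟩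
  obtain ⟨D, hD⟩ : ∃ D, D = c0 + 5 * (C + 1) + 1 := ⟨_, rfl⟩
  have main : ∀ n : ℕ, N ≤ n →
      (n : ℝ) ≤ 24 * D * (3 * C + 1 + 3 * (K * f.toFun (M * (D * n)))) ^ 3 := by
    intro n hn
    have hn1 : 1 ≤ n := by omega
    obtain ⟨H, hHdef⟩ : ∃ H : ℝ, H = K * f.toFun (M * (D * n)) := ⟨_, rfl⟩
    obtain ⟨T, hT⟩ : ∃ T, T = c0 + (C + 1) * (4 * n) := ⟨_, rfl⟩
    have hTD : T + C + 1 ≤ D * n := by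
      rw [hT, hD]; nlinarith
    have hND : n ≤ D * n := Nat.le_mul_of_pos_left n (by omega)
    have hH0 : 0 ≤ H := by
      rw [hHdef]
      refine mul_nonneg (Nat.cast_nonneg _) (f.nonneg _ ?_)
      have := Nat.le_mul_of_pos_left (D * n) hM
      omega
    have hH : ∀ w ∈ L, w.length ≤ T + C → Bd H ((eval GS w)⁻¹ * ψ w) := by
      intro w hw hl
      refine (Bd.wordLength _).mono ?_
      rw [hHdef]
      exact hd (D * n) (by omega) w hw (by omega)
    rw [← hHdef]
    obtain ⟨k, hk⟩ : ∃ k : ℝ, k = 3 * C + 1 + 3 * H := ⟨_, rfl⟩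
    have hCnn : (0 : ℝ) ≤ C := Nat.cast_nonneg _
    have hk1 : 1 ≤ k := by rw [hk]; linarith
    have hHk : H ≤ k := by rw [hk]; linarith
    have gen : ∀ a, Bd 1 a → (∀ u u', u ∈ L → u' ∈ L → ψ u' = ψ u * a → ∀ t : ℕ, ∃ w w',
        w ∈ L ∧ w' ∈ L ∧ ψ w' = ψ w * a ∧ w.take t = u.take t ∧ w'.take t = u'.take t ∧
        w.length ≤ t + C ∧ w'.length ≤ t + C) → ∀ g, (U g).length ≤ T →
        (U (g * a)).length ≤ T →
        |pot T (U (g * a)) (g * a) - pot T (U g) g - coc g a| ≤ (T + 1) * (6 * k ^ 3) := by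
      intro a ha hCa g h1 h2
      refine pot_step hk1 (U g) (U (g * a)) T ?_ h1 h2 g a ha ?_ ?_
      · intro t ht
        rw [hk]
        exact fellow ha hCa hH _ _ (hUL _) (hUL _) (by rw [hUψ, hUψ]) t ht
      · have := hH (U g) (hUL _) (by omega)
        rw [hUψ] at this
        exact this.mono hHk
      · have := hH (U (g * a)) (hUL _) (by omega)
        rw [hUψ] at this
        exact this.mono hHk
    have tp := two_paths n (fun g => (U g).length) (fun g => pot T (U g) g) (C + 1)
      ((T + 1) * (6 * k ^ 3))
      (fun g => length_step hbij.injOn hs _ _ (hUL _) (hUL _) (by rw [hUψ, hUψ]))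
      (fun g => length_step hbij.injOn hp _ _ (hUL _) (hUL _) (by rw [hUψ, hUψ]))
      T (by rw [hT, hc0]) (gen _ hsb hs) (gen _ hpb hp)
    rw [← hk]
    have hnpos : (0 : ℝ) < n := by exact_mod_cast hn1
    have hTR : (T : ℝ) + 1 ≤ D * n := by exact_mod_cast (by omega : T + 1 ≤ D * n)
    have hk3 : 0 ≤ k ^ 3 := by positivity
    have h1 : 2 * (n : ℝ) ^ 3 ≤ 8 * n * ((D * n) * (6 * k ^ 3)) :=
      tp.trans (by gcongr)
    have h2 : (2 * (n : ℝ) ^ 2) * n ≤ (2 * (n : ℝ) ^ 2) * (24 * D * k ^ 3) := by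
      nlinarith
    exact le_of_mul_le_mul_left h2 (by positivity)
  -- conclusion
  obtain ⟨E, hE⟩ : ∃ E : ℕ, E = 24 * D := ⟨_, rfl⟩
  have hE1 : 1 ≤ E := by omega
  refine ⟨6 * E * K, M * D, max N (2 * E * (3 * C + 1)) ^ 3 + f.Q + N + 1, by positivity,
    Nat.mul_pos hM (by omega), by omega, ?_, by omega, ?_⟩
  · change 1 ≤ _
    omega
  intro n hn
  have hm := main n (by omega)
  rw [← mul_assoc M D n] at hm
  obtain ⟨X, hX⟩ : ∃ X : ℝ, X = f.toFun (M * D * n) := ⟨_, rfl⟩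
  rw [← hX] at hm ⊢
  change (n : ℝ) ^ ((1 : ℝ) / 3) ≤ _
  obtain ⟨r, hr⟩ : ∃ r : ℝ, r = (n : ℝ) ^ ((1 : ℝ) / 3) := ⟨_, rfl⟩
  have hr0 : 0 ≤ r := by rw [hr]; positivity
  have hr3 : r ^ 3 = n := by
    rw [hr, ← Real.rpow_natCast, ← Real.rpow_mul (Nat.cast_nonneg _)]; norm_num
  rw [← hr]
  have hbig : (2 * E * (3 * C + 1) : ℝ) ≤ r := by
    refine le_of_pow_le_pow_left₀ (n := 3) (by norm_num) hr0 ?_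
    rw [hr3]
    have h1 : (2 * E * (3 * C + 1)) ^ 3 ≤ max N (2 * E * (3 * C + 1)) ^ 3 :=
      Nat.pow_le_pow_left (le_max_right _ _) 3
    exact_mod_cast (by omega : (2 * E * (3 * C + 1)) ^ 3 ≤ n)
  have hX0 : 0 ≤ X := by
    rw [hX]
    refine f.nonneg _ ?_
    have := Nat.le_mul_of_pos_left n (Nat.mul_pos hM (by omega : 0 < D))
    omega
  have hER : (1 : ℝ) ≤ E := by exact_mod_cast hE1
  have hrk : r ≤ E * (3 * C + 1 + 3 * (K * X)) := by
    refine le_of_pow_le_pow_left₀ (n := 3) (by norm_num) (by positivity) ?_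
    rw [hr3, mul_pow]
    refine hm.trans ?_
    have : (24 * D : ℝ) = E := by rw [hE]; push_cast; ring
    rw [this]
    refine mul_le_mul_of_nonneg_right ?_ (by positivity)
    exact le_self_pow₀ hER (by norm_num)
  push_cast
  nlinarith
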